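/- Let α ∈ ℝ, let r, d ∈ ℕ with r > -α, let C > 0, and let φ : ℝ → ℝ be continuous with c_k(φ) = 0 for all k < r and |φ(x)| ≤ C(1+|x|^d) for all x. Then there exists a constant V > 0, depending only on r, d and α, such that for all x ∈ ℝ, |R(α)φ(x)| ≤ C · V · (1+|x|^{d+r}). -/

import Mathlib

/-!
The resolvent bound follows from the decay estimate
`|P_t φ(x)| ≤ C V exp (-r t) (1 + |x| ^ (d + r))`, integrated against `exp (-α t)` with `r + α > 0`.

Write `s = exp (-t)`, `σ = √(1 - s²)` and `g_k(x) = ∫ φ (x s + σ y) H_k(y) γ(dy)`, so that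
`P_t φ = g_0`. Moving derivatives onto the Gaussian density gives `g_k' = (s / σ) g_{k+1}`
(`hasDerivAt_hermiteAvg`), although `φ` is merely continuous, while `|g_r(x)| ≤ C K (1 + |x| ^ d)`
(`hermiteAvg_growth`). For `k < r` the function `g_k` has mean zero under `γ`: rotating the plane by
`(x, y) ↦ (u, v) = (s x + σ y, -σ x + s y)` preserves `γ ⊗ γ` and turns `∫ g_k dγ` into the
integral of `φ(u) H_k(σ u + s v)`, in which `φ` is paired with powers of `u` of degree at most `k`
(`integral_hermiteAvg`). A function of mean zero is bounded by the growth of its derivative with one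
more power of `|x|` (`mean_zero_step`), so descending from `g_r` to `g_0` yields the factor
`(s / σ) ^ r` and the growth exponent `d + r` (`mean_zero_chain`). For `t ≥ 1` the ratio `s / σ` is
at most `2 exp (-t)`; for `t < 1` the crude bound on `g_0` is enough.
-/

open MeasureTheory ProbabilityTheory

/-- The standard Gaussian measure on `ℝ`. -/
noncomputable def gaussγ : Measure ℝ := gaussianReal 0 1

/-- The `k`-th probabilists' Hermite polynomial, evaluated at `x`. -/
noncomputable def Hpoly (k : ℕ) (x : ℝ) : ℝ := Polynomial.aeval x (Polynomial.hermite k)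

/-- The `k`-th Hermite coefficient of `φ` : `c_k(φ) = (1/k!) ∫ H_k φ dγ`. -/
noncomputable def ccoef (k : ℕ) (φ : ℝ → ℝ) : ℝ :=
  (1 / (Nat.factorial k : ℝ)) * ∫ x, Hpoly k x * φ x ∂gaussγ

/-- The Ornstein–Uhlenbeck (Mehler) semigroup. -/
noncomputable def Pt (t : ℝ) (φ : ℝ → ℝ) (x : ℝ) : ℝ :=
  ∫ y, φ (x * Real.exp (-t) + Real.sqrt (1 - Real.exp (-2 * t)) * y) ∂gaussγ

/-- The resolvent operator `R(α)φ(x) = -∫_0^∞ e^{-αt} P_t φ(x) dt`. -/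
noncomputable def Rop (α : ℝ) (φ : ℝ → ℝ) (x : ℝ) : ℝ :=
  -∫ t in Set.Ioi (0 : ℝ), Real.exp (-α * t) * Pt t φ x

/-! ### Hermite polynomials and polynomial growth -/

open Polynomial in
lemma Hpoly_eq_sum (k : ℕ) (x : ℝ) :
    Hpoly k x = ∑ i ∈ Finset.range (k + 1), ((hermite k).coeff i : ℝ) * x ^ i := by
  rw [Hpoly, aeval_eq_sum_range, natDegree_hermite]
  simp [zsmul_eq_mul]

lemma continuous_Hpoly (k : ℕ) : Continuous (Hpoly k) := by
  unfold Hpoly; fun_prop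

lemma hasDerivAt_Hpoly (k : ℕ) (x : ℝ) :
    HasDerivAt (Hpoly k) (x * Hpoly k x - Hpoly (k + 1) x) x := by
  have h := (Polynomial.hermite k).hasDerivAt_aeval x
  have e : Polynomial.aeval x (Polynomial.derivative (Polynomial.hermite k)) =
      x * Hpoly k x - Hpoly (k + 1) x := by
    simp [Hpoly, Polynomial.hermite_succ]
  rw [← e]
  exact h

instance : IsProbabilityMeasure gaussγ := by unfold gaussγ; infer_instance

lemma integrable_abs_pow (n : ℕ) : Integrable (fun x : ℝ => |x| ^ n) gaussγ := by
  have h := (memLp_id_gaussianReal' (μ := 0) (v := 1) (n : ENNReal) (by simp)).integrable_norm_pow'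
  simpa [gaussγ] using h

/-- Continuous functions of polynomial growth are integrable against `γ`. -/
lemma integrable_of_growth {f : ℝ → ℝ} (hf : Continuous f) {C : ℝ} {d : ℕ}
    (hb : ∀ x, |f x| ≤ C * (1 + |x| ^ d)) : Integrable f gaussγ := by
  refine Integrable.mono' (((integrable_const 1).add (integrable_abs_pow d)).const_mul C)
    hf.aestronglyMeasurable (ae_of_all _ fun x => ?_)
  simpa using hb x

lemma pow_le_one_add {a : ℝ} (ha : 0 ≤ a) {i n : ℕ} (h : i ≤ n) : a ^ i ≤ 1 + a ^ n := by
  rcases le_total a 1 with h1 | h1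
  · have := pow_le_one₀ (n := i) ha h1
    have := pow_nonneg ha n
    linarith
  · have := pow_le_pow_right₀ h1 h
    linarith

lemma Hpoly_growth (k : ℕ) : ∃ K : ℝ, 0 ≤ K ∧ ∀ x, |Hpoly k x| ≤ K * (1 + |x| ^ k) := by
  refine ⟨∑ i ∈ Finset.range (k + 1), |((Polynomial.hermite k).coeff i : ℝ)|,
    by positivity, fun x => ?_⟩
  rw [Hpoly_eq_sum, Finset.sum_mul]
  refine (Finset.abs_sum_le_sum_abs _ _).trans (Finset.sum_le_sum fun i hi => ?_)
  rw [abs_mul, abs_pow]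
  gcongr
  exact pow_le_one_add (abs_nonneg x) (by simp at hi; omega)

/-- Products of two polynomially bounded factors are polynomially bounded. -/
lemma growth_mul {f g : ℝ → ℝ} {A B : ℝ} {m n : ℕ} (hA : 0 ≤ A) (hB : 0 ≤ B)
    (hf : ∀ x, |f x| ≤ A * (1 + |x| ^ m)) (hg : ∀ x, |g x| ≤ B * (1 + |x| ^ n)) (x : ℝ) :
    |f x * g x| ≤ (4 * A * B) * (1 + |x| ^ (m + n)) := by
  rw [abs_mul]
  have h1 := pow_le_one_add (abs_nonneg x) (Nat.le_add_right m n)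
  have h2 := pow_le_one_add (abs_nonneg x) (Nat.le_add_left n m)
  have h3 : (1 + |x| ^ m) * (1 + |x| ^ n) ≤ 4 * (1 + |x| ^ (m + n)) := by
    have e : |x| ^ (m + n) = |x| ^ m * |x| ^ n := pow_add _ _ _
    have := pow_nonneg (abs_nonneg x) (m + n)
    nlinarith
  calc |f x| * |g x| ≤ (A * (1 + |x| ^ m)) * (B * (1 + |x| ^ n)) := by
        gcongr
        · exact hf x
        · exact hg x
    _ = A * B * ((1 + |x| ^ m) * (1 + |x| ^ n)) := by ring
    _ ≤ A * B * (4 * (1 + |x| ^ (m + n))) := by gcongr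
    _ = _ := by ring

lemma pow_growth (i : ℕ) (x : ℝ) : |x ^ i| ≤ 1 * (1 + |x| ^ i) := by
  rw [abs_pow]; linarith

/-- Vanishing of the Hermite coefficients below `r` means orthogonality to the monomials of
degree below `r`, since each Hermite polynomial is monic. -/
lemma moment_zero {φ : ℝ → ℝ} (hφ : Continuous φ) {C : ℝ} (hC : 0 ≤ C) {d r : ℕ}
    (hb : ∀ x, |φ x| ≤ C * (1 + |x| ^ d)) (hc : ∀ k < r, ccoef k φ = 0) :
    ∀ i < r, ∫ x, φ x * x ^ i ∂gaussγ = 0 := by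
  intro i
  induction i using Nat.strong_induction_on with
  | _ i ih =>
    intro hi
    have hInt : ∀ j : ℕ, Integrable (fun x => φ x * x ^ j) gaussγ := fun j =>
      integrable_of_growth (by fun_prop) (growth_mul hC zero_le_one hb (pow_growth j))
    have h0 : ∫ x, Hpoly i x * φ x ∂gaussγ = 0 := by
      have := hc i hi
      rw [ccoef, mul_eq_zero] at this
      exact this.resolve_left (by positivity)
    have e : ∀ x, Hpoly i x * φ x = ∑ j ∈ Finset.range i,
        ((Polynomial.hermite i).coeff j : ℝ) * (φ x * x ^ j) + φ x * x ^ i := by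
      intro x
      rw [Hpoly_eq_sum, Finset.sum_range_succ, Polynomial.coeff_hermite_self, add_mul,
        Finset.sum_mul]
      congr 1
      · exact Finset.sum_congr rfl fun j _ => by ring
      · push_cast; ring
    simp_rw [e] at h0
    rw [integral_add (integrable_finsetSum _ fun j _ => (hInt j).const_mul _) (hInt i),
      integral_finsetSum _ fun j _ => (hInt j).const_mul _] at h0
    simp_rw [integral_const_mul] at h0
    rwa [Finset.sum_eq_zero, zero_add] at h0
    intro j hj
    rw [Finset.mem_range] at hj
    rw [ih j hj (hj.trans hi), mul_zero]

/-! ### Hermite averages have Gaussian mean zero -/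

lemma measurePreserving_rotation {s σ : ℝ} (h : s ^ 2 + σ ^ 2 = 1) (hσ : 0 ≤ σ) :
    MeasurePreserving (fun p : ℝ × ℝ => (s * p.1 + σ * p.2, -σ * p.1 + s * p.2))
      (gaussγ.prod gaussγ) (gaussγ.prod gaussγ) := by
  have hcos : Real.cos (Real.arccos s) = s := Real.cos_arccos (by nlinarith) (by nlinarith)
  have hsin : Real.sin (Real.arccos s) = σ := by
    rw [Real.sin_arccos, ← h, add_sub_cancel_left, Real.sqrt_sq hσ]
  refine ⟨by fun_prop, ?_⟩
  have := IsGaussian.map_rotation_eq_self (μ := gaussianReal 0 1)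
    (by simp [integral_id_gaussianReal]) (Real.arccos s)
  change Measure.map _ ((gaussianReal 0 1).prod (gaussianReal 0 1)) = _
  refine Eq.trans (congrArg (Measure.map · _) ?_) this
  ext p <;> simp [ContinuousLinearMap.rotation_apply, hcos, hsin]

/-- The function `x ↦ ∫ φ (x s + σ y) H_k(y) γ(dy)`; up to the factor `(s / σ) ^ k` this is the `k`-th
derivative of the Mehler average of `φ`. -/
noncomputable def hermiteAvg (φ : ℝ → ℝ) (s σ : ℝ) (k : ℕ) (x : ℝ) : ℝ :=
  ∫ y, φ (x * s + σ * y) * Hpoly k y ∂gaussγ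

/-- After rotating `(x, y)` to `(u, v)` the double integral becomes that of `φ u` times a
polynomial in `(u, v)` of degree at most `k` in `u`. -/
lemma integral_hermiteAvg {φ : ℝ → ℝ} (hφ : Continuous φ) {C : ℝ} (hC : 0 ≤ C) {d r : ℕ}
    (hb : ∀ x, |φ x| ≤ C * (1 + |x| ^ d)) (hc : ∀ k < r, ccoef k φ = 0)
    {s σ : ℝ} (h : s ^ 2 + σ ^ 2 = 1) (hσ : 0 ≤ σ) {k : ℕ} (hk : k < r) :
    ∫ x, hermiteAvg φ s σ k x ∂gaussγ = 0 := by
  have hrot := measurePreserving_rotation h hσ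
  let F : ℝ × ℝ → ℝ := fun q => φ q.1 * Hpoly k (σ * q.1 + s * q.2)
  have hFc : Continuous F := by
    have := continuous_Hpoly k
    fun_prop
  have e : ∀ q : ℝ × ℝ, F q = ∑ j ∈ Finset.range (k + 1), ∑ i ∈ Finset.range (j + 1),
      (((Polynomial.hermite k).coeff j : ℝ) * σ ^ i * s ^ (j - i) * (j.choose i)) *
        ((φ q.1 * q.1 ^ i) * q.2 ^ (j - i)) := by
    intro q
    simp only [F, Hpoly_eq_sum, Finset.mul_sum, add_pow]
    refine Finset.sum_congr rfl fun j _ => Finset.sum_congr rfl fun i _ => ?_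
    rw [mul_pow, mul_pow]; ring
  have hInt : ∀ i j : ℕ, Integrable (fun q : ℝ × ℝ => (φ q.1 * q.1 ^ i) * q.2 ^ j)
      (gaussγ.prod gaussγ) := fun i j =>
    Integrable.mul_prod (f := fun x => φ x * x ^ i) (g := fun x => x ^ j)
      (integrable_of_growth (by fun_prop) (growth_mul hC zero_le_one hb (pow_growth i)))
      (integrable_of_growth (by fun_prop) (pow_growth j))
  have hFint : Integrable F (gaussγ.prod gaussγ) := by
    rw [funext e]
    exact integrable_finsetSum _ fun j _ => integrable_finsetSum _ fun i _ =>
      (hInt i (j - i)).const_mul _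
  have hF0 : ∫ q, F q ∂(gaussγ.prod gaussγ) = 0 := by
    rw [funext e, integral_finsetSum _ fun j _ => integrable_finsetSum _ fun i _ =>
      (hInt i (j - i)).const_mul _]
    refine Finset.sum_eq_zero fun j hj => ?_
    rw [integral_finsetSum _ fun i _ => (hInt i (j - i)).const_mul _]
    refine Finset.sum_eq_zero fun i hi => ?_
    rw [Finset.mem_range] at hi hj
    rw [integral_const_mul,
      integral_prod_mul (fun x => φ x * x ^ i) (fun x => x ^ (j - i)),
      moment_zero hφ hC hb hc i (by omega), zero_mul, mul_zero]
  have e2 : ∀ p : ℝ × ℝ, F (s * p.1 + σ * p.2, -σ * p.1 + s * p.2) =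
      φ (p.1 * s + σ * p.2) * Hpoly k p.2 := by
    intro p
    have : σ * (s * p.1 + σ * p.2) + s * (-σ * p.1 + s * p.2) = p.2 := by
      linear_combination p.2 * h
    simp only [F, this]
    rw [mul_comm s p.1]
  have hI := hrot.integrable_comp_of_integrable hFint
  have hmap : ∫ p, F (s * p.1 + σ * p.2, -σ * p.1 + s * p.2) ∂(gaussγ.prod gaussγ) = 0 := by
    rw [← hF0, ← hrot.map_eq, integral_map hrot.measurable.aemeasurable
      hFc.aestronglyMeasurable, hrot.map_eq]
  have hI' : Integrable (fun p : ℝ × ℝ => φ (p.1 * s + σ * p.2) * Hpoly k p.2)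
      (gaussγ.prod gaussγ) := hI.congr (ae_of_all _ e2)
  simp_rw [e2] at hmap
  rw [integral_prod _ hI'] at hmap
  exact hmap

/-! ### Growth of Hermite averages -/

/-- The crude bound on Hermite averages, uniform in the rotation `(s, σ)`. -/
lemma hermiteAvg_growth (k d : ℕ) : ∃ K : ℝ, 0 ≤ K ∧ ∀ (φ : ℝ → ℝ) (C s σ : ℝ), 0 ≤ C →
    (∀ x, |φ x| ≤ C * (1 + |x| ^ d)) → |s| ≤ 1 → |σ| ≤ 1 →
    ∀ x, |hermiteAvg φ s σ k x| ≤ C * K * (1 + |x| ^ d) := by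
  refine ⟨2 ^ d * ∫ y, (1 + |y| ^ d) * |Hpoly k y| ∂gaussγ,
    mul_nonneg (by positivity) (integral_nonneg fun y => by positivity), ?_⟩
  intro φ C s σ hC hb hs hσ x
  obtain ⟨K, hK, hH⟩ := Hpoly_growth k
  have hInt : Integrable (fun y => (1 + |y| ^ d) * |Hpoly k y|) gaussγ := by
    have := continuous_Hpoly k
    refine integrable_of_growth (by fun_prop) (growth_mul (m := d) zero_le_one hK (fun y => ?_)
      (fun y => by rw [abs_abs]; exact hH y))
    rw [one_mul, abs_of_nonneg (by positivity)]
  have hpt : ∀ y, ‖φ (x * s + σ * y) * Hpoly k y‖ ≤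
      (C * 2 ^ d * (1 + |x| ^ d)) * ((1 + |y| ^ d) * |Hpoly k y|) := by
    intro y
    have h1 : |x * s + σ * y| ≤ |x| + |y| := by
      refine (abs_add_le _ _).trans ?_
      rw [abs_mul, abs_mul]
      have := mul_le_mul_of_nonneg_left hs (abs_nonneg x)
      have := mul_le_mul_of_nonneg_right hσ (abs_nonneg y)
      linarith
    have h2 : |x * s + σ * y| ^ d ≤ 2 ^ d * (|x| ^ d + |y| ^ d) := by
      refine (pow_le_pow_left₀ (abs_nonneg _) h1 d).trans
        ((add_pow_le (abs_nonneg _) (abs_nonneg _) d).trans ?_)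
      gcongr
      · norm_num
      · omega
    have h3 : (1 : ℝ) ≤ 2 ^ d := one_le_pow₀ (by norm_num)
    have h4 : 1 + |x * s + σ * y| ^ d ≤ 2 ^ d * ((1 + |x| ^ d) * (1 + |y| ^ d)) := by
      have : 0 ≤ (2 : ℝ) ^ d * (|x| ^ d * |y| ^ d) := by positivity
      nlinarith
    rw [Real.norm_eq_abs, abs_mul]
    calc |φ (x * s + σ * y)| * |Hpoly k y|
        ≤ (C * (2 ^ d * ((1 + |x| ^ d) * (1 + |y| ^ d)))) * |Hpoly k y| := by
          gcongr
          exact (hb _).trans (by gcongr)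
      _ = _ := by ring
  have := norm_integral_le_of_norm_le (hInt.const_mul _) (ae_of_all _ hpt)
  rw [integral_const_mul, Real.norm_eq_abs] at this
  refine this.trans (le_of_eq ?_)
  ring

/-! ### Differentiating Hermite averages -/

lemma growth_exp {f : ℝ → ℝ} {A : ℝ} {d : ℕ} (hA : 0 ≤ A)
    (hb : ∀ x, |f x| ≤ A * (1 + |x| ^ d)) :
    ∃ M : ℝ, 0 ≤ M ∧ ∀ x, |f x| ≤ M * Real.exp |x| := by
  refine ⟨A * (1 + d.factorial), by positivity, fun x => (hb x).trans ?_⟩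
  have h1 := Real.pow_div_factorial_le_exp |x| (abs_nonneg x) d
  rw [div_le_iff₀ (by positivity)] at h1
  have h2 : (1 : ℝ) ≤ Real.exp |x| := Real.one_le_exp (abs_nonneg x)
  rw [mul_assoc]
  gcongr
  linarith

/-- The Hermite function `H_k` times the standard Gaussian density. -/
noncomputable def hermiteDensity (k : ℕ) (y : ℝ) : ℝ := Hpoly k y * gaussianPDFReal 0 1 y

lemma hermiteDensity_eq (k : ℕ) (y : ℝ) :
    hermiteDensity k y = (√(2 * Real.pi))⁻¹ * (Hpoly k y * Real.exp (-y ^ 2 / 2)) := by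
  simp [hermiteDensity, gaussianPDFReal]
  ring

lemma hasDerivAt_hermiteDensity (k : ℕ) (y : ℝ) :
    HasDerivAt (hermiteDensity k) (-hermiteDensity (k + 1) y) y := by
  have h1 : HasDerivAt (fun y : ℝ => Real.exp (-y ^ 2 / 2)) (Real.exp (-y ^ 2 / 2) * (-y)) y := by
    refine HasDerivAt.exp ?_
    have := ((hasDerivAt_pow 2 y).neg).div_const 2
    refine this.congr_deriv ?_
    simp
    ring
  have h2 := ((hasDerivAt_Hpoly k y).mul h1).const_mul (√(2 * Real.pi))⁻¹
  rw [funext (hermiteDensity_eq k)]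
  refine h2.congr_deriv ?_
  rw [hermiteDensity_eq]
  ring

lemma continuous_hermiteDensity (k : ℕ) : Continuous (hermiteDensity k) :=
  continuous_iff_continuousAt.2 fun y => (hasDerivAt_hermiteDensity k y).continuousAt

lemma hermiteDensity_bound (k : ℕ) :
    ∃ M : ℝ, 0 ≤ M ∧ ∀ y, |hermiteDensity k y| ≤ M * Real.exp (-y ^ 2 / 4) := by
  obtain ⟨K, hK, hH⟩ := Hpoly_growth k
  obtain ⟨M, hM, hexp⟩ := growth_exp hK hH
  refine ⟨(√(2 * Real.pi))⁻¹ * M * Real.exp 1, by positivity, fun y => ?_⟩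
  rw [hermiteDensity_eq, abs_mul, abs_mul, Real.abs_exp, abs_of_nonneg (by positivity)]
  have h : Real.exp |y| * Real.exp (-y ^ 2 / 2) ≤ Real.exp 1 * Real.exp (-y ^ 2 / 4) := by
    rw [← Real.exp_add, ← Real.exp_add, Real.exp_le_exp]
    nlinarith [sq_nonneg (|y| - 2), sq_abs y]
  calc (√(2 * Real.pi))⁻¹ * (|Hpoly k y| * Real.exp (-y ^ 2 / 2))
      ≤ (√(2 * Real.pi))⁻¹ * ((M * Real.exp |y|) * Real.exp (-y ^ 2 / 2)) := by
        gcongr; exact hexp y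
    _ = (√(2 * Real.pi))⁻¹ * M * (Real.exp |y| * Real.exp (-y ^ 2 / 2)) := by ring
    _ ≤ (√(2 * Real.pi))⁻¹ * M * (Real.exp 1 * Real.exp (-y ^ 2 / 4)) := by gcongr
    _ = _ := by ring

/-- Moving the translation from `f` onto the smooth Hermite function. -/
lemma integral_shift (f : ℝ → ℝ) (k : ℕ) (u : ℝ) :
    ∫ y, f (u + y) * Hpoly k y ∂gaussγ = ∫ z, f z * hermiteDensity k (z - u) := by
  rw [gaussγ, integral_gaussianReal_eq_integral_smul one_ne_zero,
    ← integral_add_right_eq_self (fun z => f z * hermiteDensity k (z - u)) u]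
  refine integral_congr_ae (ae_of_all _ fun y => ?_)
  simp only [hermiteDensity, smul_eq_mul]
  rw [add_sub_cancel_right, add_comm y u]
  ring

/-- Gaussian integration by parts: differentiating in the translation raises the Hermite index,
with no regularity of `f` needed beyond continuity. -/
lemma hasDerivAt_shift {f : ℝ → ℝ} (hf : Continuous f) {A : ℝ} {d : ℕ} (hA : 0 ≤ A)
    (hb : ∀ x, |f x| ≤ A * (1 + |x| ^ d)) (k : ℕ) (u : ℝ) :
    HasDerivAt (fun u => ∫ y, f (u + y) * Hpoly k y ∂gaussγ)
      (∫ y, f (u + y) * Hpoly (k + 1) y ∂gaussγ) u := by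
  obtain ⟨M, hM, hfM⟩ := growth_exp hA hb
  -- a Gaussian majorant of the integrand, uniform for translations within distance `1` of `u`
  have key : ∀ j : ℕ, ∃ B : ℝ, ∀ v ∈ Metric.ball u 1, ∀ z,
      |f z * hermiteDensity j (z - v)| ≤ B * Real.exp (-(1 / 16) * (z - u) ^ 2) := by
    intro j
    obtain ⟨N, hN, hjN⟩ := hermiteDensity_bound j
    refine ⟨M * N * Real.exp (|u| + 5), fun v hv z => ?_⟩
    rw [Metric.mem_ball, Real.dist_eq] at hv
    have hexp : Real.exp |z| * Real.exp (-(z - v) ^ 2 / 4) ≤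
        Real.exp (|u| + 5) * Real.exp (-(1 / 16) * (z - u) ^ 2) := by
      rw [← Real.exp_add, ← Real.exp_add, Real.exp_le_exp]
      have h1 : |z| ≤ |z - u| + |u| := by simpa using abs_add_le (z - u) u
      have h2 : (v - u) ^ 2 ≤ 1 := by
        rw [← sq_abs]; nlinarith [abs_nonneg (v - u)]
      have h3 : (z - u) ^ 2 ≤ 2 * (z - v) ^ 2 + 2 * (v - u) ^ 2 := by
        nlinarith [sq_nonneg ((z - v) - (v - u))]
      nlinarith [sq_nonneg (|z - u| - 8), sq_abs (z - u)]
    rw [abs_mul]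
    calc |f z| * |hermiteDensity j (z - v)|
        ≤ (M * Real.exp |z|) * (N * Real.exp (-(z - v) ^ 2 / 4)) := by
          gcongr
          · exact hfM z
          · exact hjN _
      _ = M * N * (Real.exp |z| * Real.exp (-(z - v) ^ 2 / 4)) := by ring
      _ ≤ M * N * (Real.exp (|u| + 5) * Real.exp (-(1 / 16) * (z - u) ^ 2)) := by gcongr
      _ = _ := by ring
  have hgauss : ∀ B : ℝ, Integrable (fun z : ℝ => B * Real.exp (-(1 / 16) * (z - u) ^ 2)) :=
    fun B => ((integrable_exp_neg_mul_sq (by norm_num : (0 : ℝ) < 1 / 16)).comp_sub_right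
      u).const_mul B
  obtain ⟨B, hB⟩ := key k
  obtain ⟨B', hB'⟩ := key (k + 1)
  have hcont : ∀ (j : ℕ) (v : ℝ), Continuous fun z => f z * hermiteDensity j (z - v) := by
    intro j v
    have := continuous_hermiteDensity j
    fun_prop
  simp_rw [integral_shift]
  refine (hasDerivAt_integral_of_dominated_loc_of_deriv_le
    (F := fun v z => f z * hermiteDensity k (z - v))
    (F' := fun v z => f z * hermiteDensity (k + 1) (z - v))
    (bound := fun z => B' * Real.exp (-(1 / 16) * (z - u) ^ 2))
    (Metric.ball_mem_nhds u one_pos)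
    (Filter.Eventually.of_forall fun v => (hcont k v).aestronglyMeasurable)
    ((hgauss B).mono' (hcont k u).aestronglyMeasurable
      (ae_of_all _ fun z => hB u (Metric.mem_ball_self one_pos) z))
    (hcont (k + 1) u).aestronglyMeasurable
    (ae_of_all _ fun z v hv => hB' v hv z) (hgauss B')
    (ae_of_all _ fun z v _ => ?_)).2
  have h1 : HasDerivAt (fun v => z - v) (-1) v := by
    simpa using (hasDerivAt_id v).const_sub z
  have h2 := ((hasDerivAt_hermiteDensity k (z - v)).comp v h1).const_mul (f z)
  refine h2.congr_deriv ?_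
  ring

lemma hasDerivAt_hermiteAvg {φ : ℝ → ℝ} (hφ : Continuous φ) {C : ℝ} {d : ℕ} (hC : 0 ≤ C)
    (hb : ∀ x, |φ x| ≤ C * (1 + |x| ^ d)) {s σ : ℝ} (hσ : 0 < σ) (hσ1 : σ ≤ 1) (k : ℕ) (x : ℝ) :
    HasDerivAt (hermiteAvg φ s σ k) (s / σ * hermiteAvg φ s σ (k + 1) x) x := by
  have hb' : ∀ y, |φ (σ * y)| ≤ C * (1 + |y| ^ d) := by
    intro y
    refine (hb _).trans ?_
    have h : |σ * y| ≤ |y| := by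
      rw [abs_mul, abs_of_pos hσ]
      exact mul_le_of_le_one_left (abs_nonneg y) hσ1
    have := pow_le_pow_left₀ (abs_nonneg _) h d
    gcongr
  have e : ∀ (j : ℕ) (x : ℝ), hermiteAvg φ s σ j x =
      ∫ y, (fun z => φ (σ * z)) (x * (s / σ) + y) * Hpoly j y ∂gaussγ := by
    intro j x
    refine integral_congr_ae (ae_of_all _ fun y => ?_)
    have : x * s + σ * y = σ * (x * (s / σ) + y) := by field_simp
    simp only [this]
  have h1 : HasDerivAt (fun x => x * (s / σ)) (s / σ) x := hasDerivAt_mul_const _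
  have h2 := (hasDerivAt_shift (f := fun z => φ (σ * z)) (by fun_prop) hC hb' k
    (x * (s / σ))).comp x h1
  rw [funext (e k), e (k + 1), mul_comm]
  exact h2

/-! ### Mean-zero estimates and decay of the semigroup -/

/-- A Poincaré-type pointwise estimate: a function with Gaussian mean zero is controlled by its
derivative at the cost of one power of growth. -/
lemma mean_zero_step (n : ℕ) : ∃ V : ℝ, 0 ≤ V ∧ ∀ (g g' : ℝ → ℝ) (B : ℝ), 0 ≤ B →
    (∀ x, HasDerivAt g (g' x) x) → (∀ x, |g' x| ≤ B * (1 + |x| ^ n)) →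
    ∫ x, g x ∂gaussγ = 0 → ∀ x, |g x| ≤ B * V * (1 + |x| ^ (n + 1)) := by
  set m : ℝ := ∫ y, |y| ^ (n + 1) ∂gaussγ with hm
  have hm0 : 0 ≤ m := integral_nonneg fun y => by positivity
  refine ⟨4 * (1 + m), by positivity, fun g g' B hB hg hg' hmean x => ?_⟩
  have hlip : ∀ x y, |g x - g y| ≤ 4 * B * (1 + |x| ^ (n + 1) + |y| ^ (n + 1)) := by
    intro x y
    have hx := abs_nonneg x
    have hy := abs_nonneg y
    have hseg : |g x - g y| ≤ (B * (1 + |x| ^ n + |y| ^ n)) * |x - y| := by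
      refine Convex.norm_image_sub_le_of_norm_hasDerivWithin_le (s := Set.uIcc y x)
        (fun z _ => (hg z).hasDerivWithinAt) (fun z hz => ?_) (convex_uIcc y x)
        Set.left_mem_uIcc Set.right_mem_uIcc
      refine (hg' z).trans ?_
      have hz' : |z| ≤ max |y| |x| := by
        rw [Set.mem_uIcc] at hz
        rcases hz with hz | hz
        · exact abs_le_max_abs_abs hz.1 hz.2
        · rw [max_comm]; exact abs_le_max_abs_abs hz.1 hz.2
      have : |z| ^ n ≤ |x| ^ n + |y| ^ n := by
        rcases le_max_iff.1 hz' with h | h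
        · have := pow_le_pow_left₀ (abs_nonneg z) h n
          have := pow_nonneg hx n
          linarith
        · have := pow_le_pow_left₀ (abs_nonneg z) h n
          have := pow_nonneg hy n
          linarith
      rw [add_assoc]
      gcongr
    have hxy : |x - y| ≤ |x| + |y| := abs_sub x y
    have hmix : ∀ a b : ℝ, 0 ≤ a → 0 ≤ b → a ^ n * b ≤ a ^ (n + 1) + b ^ (n + 1) := by
      intro a b ha hb
      rcases le_total a b with h | h
      · have h1 : a ^ n * b ≤ b ^ n * b := by gcongr
        have := pow_nonneg ha (n + 1)
        rw [pow_succ b]; linarith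
      · have h1 : a ^ n * b ≤ a ^ n * a := by gcongr
        have := pow_nonneg hb (n + 1)
        rw [pow_succ a]; linarith
    have h1 := hmix _ _ hx hy
    have h2 := hmix _ _ hy hx
    have h3 := pow_le_one_add hx (show 1 ≤ n + 1 by omega)
    have h4 := pow_le_one_add hy (show 1 ≤ n + 1 by omega)
    rw [pow_one] at h3 h4
    have h5 : (1 + |x| ^ n + |y| ^ n) * (|x| + |y|) ≤
        4 * (1 + |x| ^ (n + 1) + |y| ^ (n + 1)) := by
      have e1 : |x| ^ (n + 1) = |x| ^ n * |x| := pow_succ _ _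
      have e2 : |y| ^ (n + 1) = |y| ^ n * |y| := pow_succ _ _
      nlinarith
    calc |g x - g y| ≤ (B * (1 + |x| ^ n + |y| ^ n)) * (|x| + |y|) :=
          hseg.trans (by gcongr)
      _ = B * ((1 + |x| ^ n + |y| ^ n) * (|x| + |y|)) := by ring
      _ ≤ B * (4 * (1 + |x| ^ (n + 1) + |y| ^ (n + 1))) := by gcongr
      _ = _ := by ring
  have hgc : Continuous g := continuous_iff_continuousAt.2 fun y => (hg y).continuousAt
  have hgi : Integrable g gaussγ := by
    refine integrable_of_growth hgc (C := |g 0| + 4 * B) (d := n + 1) fun y => ?_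
    have h1 := hlip y 0
    have h2 : |g y| ≤ |g y - g 0| + |g 0| := by simpa using abs_add_le (g y - g 0) (g 0)
    have h3 : 0 ≤ |g 0| * |y| ^ (n + 1) := by positivity
    rw [abs_zero, zero_pow (by omega), add_zero] at h1
    linarith
  have hi : Integrable (fun y : ℝ => 1 + |x| ^ (n + 1) + |y| ^ (n + 1)) gaussγ :=
    (integrable_const _).add (integrable_abs_pow _)
  have hrepr : ∫ y, (g x - g y) ∂gaussγ = g x := by
    rw [integral_sub (integrable_const _) hgi, hmean]
    simp
  have hle := norm_integral_le_of_norm_le (f := fun y => g x - g y) (hi.const_mul (4 * B))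
    (ae_of_all _ fun y => hlip x y)
  rw [hrepr, integral_const_mul, integral_add (integrable_const _) (integrable_abs_pow _),
    Real.norm_eq_abs, ← hm] at hle
  simp only [integral_const, probReal_univ, one_smul] at hle
  refine hle.trans ?_
  have : 0 ≤ B * (m * |x| ^ (n + 1)) := by positivity
  nlinarith

/-- Iterating the mean-zero estimate along a chain of derivatives, each carrying a factor `c`. -/
lemma mean_zero_chain (d r : ℕ) : ∃ V : ℝ, 0 ≤ V ∧ ∀ (g : ℕ → ℝ → ℝ) (c B : ℝ), 0 ≤ c → 0 ≤ B →
    (∀ k x, HasDerivAt (g k) (c * g (k + 1) x) x) → (∀ k < r, ∫ x, g k x ∂gaussγ = 0) →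
    (∀ x, |g r x| ≤ B * (1 + |x| ^ d)) → ∀ x, |g 0 x| ≤ B * V * c ^ r * (1 + |x| ^ (d + r)) := by
  induction r with
  | zero => exact ⟨1, zero_le_one, fun g c B _ _ _ _ h x => by simpa using h x⟩
  | succ r ih =>
    obtain ⟨V, hV, ih⟩ := ih
    obtain ⟨W, hW, step⟩ := mean_zero_step (d + r)
    refine ⟨V * W, by positivity, fun g c B hc hB hg hmean hb x => ?_⟩
    have h1 := ih (fun k => g (k + 1)) c B hc hB (fun k x => hg (k + 1) x)
      (fun k hk => hmean (k + 1) (by omega)) hb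
    have h2 := step (g 0) (fun x => c * g 1 x) (B * V * c ^ (r + 1)) (by positivity) (hg 0)
      (fun x => ?_) (hmean 0 (by omega)) x
    · refine h2.trans (le_of_eq ?_)
      rw [add_assoc]
      ring
    · rw [abs_mul, abs_of_nonneg hc]
      refine (mul_le_mul_of_nonneg_left (h1 x) hc).trans (le_of_eq ?_)
      ring

/-- Exponential decay of the semigroup on functions orthogonal to polynomials of degree below
`r`. The derivative chain handles `t ≥ 1`, where `s / σ` is comparable to `exp (-t)`; the crude
bound suffices for `t < 1`. -/
lemma Pt_decay (d r : ℕ) : ∃ V : ℝ, 0 ≤ V ∧ ∀ (φ : ℝ → ℝ) (C : ℝ), 0 ≤ C → Continuous φ →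
    (∀ k < r, ccoef k φ = 0) → (∀ x, |φ x| ≤ C * (1 + |x| ^ d)) →
    ∀ t, 0 < t → ∀ x, |Pt t φ x| ≤ C * V * Real.exp (-(r * t)) * (1 + |x| ^ (d + r)) := by
  obtain ⟨K, hK, hgr⟩ := hermiteAvg_growth r d
  obtain ⟨K0, hK0, hg0⟩ := hermiteAvg_growth 0 d
  obtain ⟨V, hV, hch⟩ := mean_zero_chain d r
  refine ⟨K * V * 2 ^ r + 2 * K0 * Real.exp r, by positivity, ?_⟩
  intro φ C hC hφ hc hb t ht x
  set s := Real.exp (-t) with hs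
  set σ := √(1 - Real.exp (-2 * t)) with hσdef
  have hs0 : 0 < s := Real.exp_pos _
  have hs1 : s < 1 := by
    rw [hs, ← Real.exp_zero]; exact Real.exp_lt_exp.2 (by linarith)
  have hsq : Real.exp (-2 * t) = s ^ 2 := by
    rw [hs, ← Real.exp_nat_mul]; congr 1; push_cast; ring
  have hpos : 0 < 1 - Real.exp (-2 * t) := by rw [hsq]; nlinarith
  have hσ : 0 < σ := Real.sqrt_pos.2 hpos
  have hrel : s ^ 2 + σ ^ 2 = 1 := by rw [hσdef, Real.sq_sqrt hpos.le, hsq]; ring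
  have hσ1 : σ ≤ 1 := by nlinarith
  have hs1' : |s| ≤ 1 := by rw [abs_of_pos hs0]; exact hs1.le
  have hσ1' : |σ| ≤ 1 := by rw [abs_of_pos hσ]; exact hσ1
  have hPt : Pt t φ x = hermiteAvg φ s σ 0 x := by
    simp [Pt, hermiteAvg, Hpoly, hs, hσdef]
  have hsr : Real.exp (-(r * t)) = s ^ r := by
    rw [hs, ← Real.exp_nat_mul]; congr 1; ring
  rw [hPt, hsr]
  rcases le_total 1 t with h1 | h1
  · have hshalf : s ≤ 1 / 2 := by
      have : s ≤ Real.exp (-1) := Real.exp_le_exp.2 (by linarith)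
      have := Real.exp_neg_one_lt_half
      linarith
    have hσhalf : 1 / 2 ≤ σ := by nlinarith
    have hcs : s / σ ≤ 2 * s := by rw [div_le_iff₀ hσ]; nlinarith
    have h := hch (hermiteAvg φ s σ) (s / σ) (C * K) (by positivity) (by positivity)
      (fun k x => hasDerivAt_hermiteAvg hφ hC hb hσ hσ1 k x)
      (fun k hk => integral_hermiteAvg hφ hC hb hc hrel hσ.le hk)
      (hgr φ C s σ hC hb hs1' hσ1') x
    calc |hermiteAvg φ s σ 0 x| ≤ C * K * V * (s / σ) ^ r * (1 + |x| ^ (d + r)) := h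
      _ ≤ C * K * V * (2 * s) ^ r * (1 + |x| ^ (d + r)) := by gcongr
      _ = C * (K * V * 2 ^ r + 0) * s ^ r * (1 + |x| ^ (d + r)) := by rw [mul_pow]; ring
      _ ≤ _ := by gcongr; positivity
  · have hes : 1 ≤ Real.exp r * s ^ r := by
      rw [← hsr, ← Real.exp_add]
      refine Real.one_le_exp ?_
      nlinarith [(Nat.cast_nonneg r : (0 : ℝ) ≤ r)]
    have hx : 1 + |x| ^ d ≤ 2 * (1 + |x| ^ (d + r)) := by
      have := pow_le_one_add (abs_nonneg x) (Nat.le_add_right d r)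
      have := pow_nonneg (abs_nonneg x) (d + r)
      linarith
    calc |hermiteAvg φ s σ 0 x| ≤ C * K0 * (1 + |x| ^ d) := hg0 φ C s σ hC hb hs1' hσ1' x
      _ ≤ C * K0 * (2 * (1 + |x| ^ (d + r))) := by gcongr
      _ = C * K0 * 1 * (2 * (1 + |x| ^ (d + r))) := by ring
      _ ≤ C * K0 * (Real.exp r * s ^ r) * (2 * (1 + |x| ^ (d + r))) := by gcongr
      _ = C * (0 + 2 * K0 * Real.exp r) * s ^ r * (1 + |x| ^ (d + r)) := by ring
      _ ≤ _ := by gcongr; positivity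

/-- For `r > -α` there exists `V > 0`, depending only on `r`, `d` and `α`, such that for
every continuous `φ` with Hermite coefficients vanishing below `r` and
`|φ(x)| ≤ C (1+|x|^d)`, one has `|R(α)φ(x)| ≤ C V (1+|x|^{d+r})`. -/
theorem stmt_11 (α : ℝ) (r d : ℕ) (hr : -α < (r : ℝ)) :
    ∃ V : ℝ, 0 < V ∧ ∀ (C : ℝ), 0 < C → ∀ φ : ℝ → ℝ, Continuous φ →
      (∀ k : ℕ, k < r → ccoef k φ = 0) →
      (∀ x : ℝ, |φ x| ≤ C * (1 + |x| ^ d)) →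
      ∀ x : ℝ, |Rop α φ x| ≤ C * V * (1 + |x| ^ (d + r)) := by
  obtain ⟨V, hV, hdecay⟩ := Pt_decay d r
  have hβ : 0 < (r : ℝ) + α := by linarith
  refine ⟨(V + 1) / (r + α), by positivity, fun C hC φ hφ hc hb x => ?_⟩
  have hInt : Integrable (fun t : ℝ => C * V * (1 + |x| ^ (d + r)) * Real.exp (-(r + α) * t))
      (volume.restrict (Set.Ioi 0)) := (exp_neg_integrableOn_Ioi 0 hβ).const_mul _
  have hle : ∀ᵐ t ∂(volume.restrict (Set.Ioi (0 : ℝ))), ‖Real.exp (-α * t) * Pt t φ x‖ ≤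
      C * V * (1 + |x| ^ (d + r)) * Real.exp (-(r + α) * t) := by
    refine (ae_restrict_mem measurableSet_Ioi).mono fun t ht => ?_
    rw [Real.norm_eq_abs, abs_mul, Real.abs_exp]
    have e : Real.exp (-(r + α) * t) = Real.exp (-α * t) * Real.exp (-(r * t)) := by
      rw [← Real.exp_add]; congr 1; ring
    refine (mul_le_mul_of_nonneg_left (hdecay φ C hC.le hφ hc hb t ht x)
      (Real.exp_pos _).le).trans (le_of_eq ?_)
    rw [e]; ring
  have h := norm_integral_le_of_norm_le hInt hle
  rw [integral_const_mul, integral_exp_mul_Ioi (by linarith), Real.norm_eq_abs] at h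
  rw [Rop, abs_neg]
  refine h.trans ?_
  have e : -Real.exp (-(r + α) * 0) / (-(r + α)) = 1 / (r + α) := by
    rw [mul_zero, Real.exp_zero, neg_div_neg_eq]
  rw [e]
  calc C * V * (1 + |x| ^ (d + r)) * (1 / (r + α))
      = C * (V / (r + α)) * (1 + |x| ^ (d + r)) := by ring
    _ ≤ C * ((V + 1) / (r + α)) * (1 + |x| ^ (d + r)) := by gcongr; linarith
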